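/- Let p be an odd prime, n a positive integer, q = p^n, and let k be a finite field with q² elements. Let G = k^× ⋊ ℤ be the semidirect product in which m ∈ ℤ acts on k^× by the m-th power of the automorphism x ↦ x^q. Then H²(G, ℂ^×), with ℂ^× a trivial G-module, is isomorphic as an abelian group to ℤ/(q−1)ℤ. -/

import Mathlib

open groupCohomology

noncomputable section

/-!
Write `G = C ⋊ ℤ`, where the generator `t` of `ℤ` acts on the finite cyclic group `C` by `σ`, and
let `A` be a divisible abelian group with trivial action. A 2-cocycle `f` on `G` defines a central
extension of `G` by `A`, in which the commutator of lifts of `t` and of a fixed point `c` of `σ`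
depends only on `t` and `c`; this gives a character `c ↦ f (t, c) - f (c, t)` of the fixed points.
As `H²(C, A) = 0`, the extension has a splitting `s` over `C`, and a lift of `t` conjugates `s c` to
`s (σ c)` up to a character `χ c`. If the commutator character vanishes, `χ` is trivial on the fixed
points, hence `χ = (ψ ∘ σ) / ψ` by divisibility; twisting `s` by `ψ` makes it equivariant, so the
whole extension splits. Conversely every character of the fixed points extends to `C` and yields a
cocycle through a crossed homomorphism from `ℤ` to the characters of `C`. So `H²(G, A)` is the
character group of the fixed points of `σ`, which for `x ↦ x ^ q` on `kˣ` are the `q - 1` solutions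
of `x ^ (q - 1) = 1`.
-/

universe u

section CocycleExtension

variable {k G : Type u} [CommRing k] [Group G] {A : Rep k G}

/-- The group extension of `G` by `A` attached to a 2-cocycle `f`: the set `A × G` with product
`(a, g) * (b, h) = (a + g • b + f (g, h), g * h)`. As `f` need not be normalised, the identity is
`(-f (1, 1), 1)`. -/
@[ext]
structure CocycleExtension (f : cocycles₂ A) where
  /-- The component in the coefficient module. -/
  left : A
  /-- The component in the group. -/
  right : G

namespace CocycleExtension

variable {f : cocycles₂ A}

instance : Mul (CocycleExtension f) :=
  ⟨fun x y ↦ ⟨x.left + A.ρ x.right y.left + f (x.right, y.right), x.right * y.right⟩⟩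

instance : One (CocycleExtension f) := ⟨⟨-f (1, 1), 1⟩⟩

instance : Inv (CocycleExtension f) :=
  ⟨fun x ↦ ⟨-f (1, 1) - f (x.right⁻¹, x.right) - A.ρ x.right⁻¹ x.left, x.right⁻¹⟩⟩

@[simp] lemma mul_left (x y : CocycleExtension f) :
    (x * y).left = x.left + A.ρ x.right y.left + f (x.right, y.right) := rfl

@[simp] lemma mul_right (x y : CocycleExtension f) : (x * y).right = x.right * y.right := rfl

@[simp] lemma one_left : (1 : CocycleExtension f).left = -f (1, 1) := rfl

@[simp] lemma one_right : (1 : CocycleExtension f).right = 1 := rfl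

@[simp] lemma inv_left (x : CocycleExtension f) :
    x⁻¹.left = -f (1, 1) - f (x.right⁻¹, x.right) - A.ρ x.right⁻¹ x.left := rfl

@[simp] lemma inv_right (x : CocycleExtension f) : x⁻¹.right = x.right⁻¹ := rfl

instance : Group (CocycleExtension f) :=
  .ofLeftAxioms
    (fun x y z ↦ by
      have hf := (mem_cocycles₂_iff f).1 f.2 x.right y.right z.right
      ext
      · simp only [mul_left, mul_right, map_add, map_mul, Module.End.mul_apply]
        linear_combination (norm := module) hf
      · exact mul_assoc ..)
    (fun x ↦ by ext <;> simp [cocycles₂_map_one_fst])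
    (fun x ↦ by ext <;> simp)

variable (f) in
/-- The short exact sequence `1 → A → CocycleExtension f → G → 1`. -/
def toGroupExtension : GroupExtension (Multiplicative A) (CocycleExtension f) G where
  inl :=
    { toFun a := ⟨a.toAdd - f (1, 1), 1⟩
      map_one' := by ext <;> simp
      map_mul' a b := by
        ext
        · simp only [toAdd_mul, mul_left, map_one, Module.End.one_apply]
          abel
        · simp }
  rightHom :=
    { toFun := right
      map_one' := rfl
      map_mul' _ _ := rfl }
  inl_injective a b h := by simpa using congrArg left h
  range_inl_eq_ker_rightHom := by
    ext x
    refine ⟨?_, fun hx ↦ ⟨.ofAdd (x.left + f (1, 1)), ?_⟩⟩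
    · rintro ⟨a, rfl⟩
      rfl
    · exact CocycleExtension.ext (by simp) (MonoidHom.mem_ker.1 hx).symm
  rightHom_surjective g := ⟨⟨0, g⟩, rfl⟩

@[simp] lemma inl_left (a : Multiplicative A) :
    ((toGroupExtension f).inl a).left = a.toAdd - f (1, 1) := rfl

@[simp] lemma inl_right (a : Multiplicative A) : ((toGroupExtension f).inl a).right = 1 := rfl

@[simp] lemma rightHom_apply (x : CocycleExtension f) :
    (toGroupExtension f).rightHom x = x.right := rfl

theorem exists_lift_iff_exists_coboundary {H : Type*} [Group H] (φ : H →* G) :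
    (∃ s : H →* CocycleExtension f, ∀ h, (toGroupExtension f).rightHom (s h) = φ h) ↔
      ∃ x : H → A, ∀ g h, A.ρ (φ g) (x h) - x (g * h) + x g = f (φ g, φ h) := by
  constructor
  · rintro ⟨s, hs⟩
    have hright (h : H) : (s h).right = φ h := hs h
    refine ⟨fun h ↦ -(s h).left, fun g h ↦ ?_⟩
    simp only [map_mul, mul_left, hright, map_neg]
    abel
  · rintro ⟨x, hx⟩
    refine ⟨.mk' (fun h ↦ ⟨-x h, φ h⟩) fun g h ↦ ?_, fun _ ↦ rfl⟩
    ext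
    · simp only [mul_left, map_neg, ← hx]
      abel
    · simp

end CocycleExtension

end CocycleExtension

section Trivial

variable {k G : Type u} [CommRing k] [Group G] {A : Rep k G} [A.IsTrivial] {f : cocycles₂ A}

namespace CocycleExtension

theorem inl_commute (a : Multiplicative A) (x : CocycleExtension f) :
    Commute ((toGroupExtension f).inl a) x := by
  ext
  · have hf : f (x.right, 1) = f (1, 1) :=
      (cocycles₂_map_one_snd f x.right).trans (Representation.isTrivial_apply ..)
    simp [cocycles₂_map_one_fst, hf, add_comm]
  · simp

theorem mul_eq_inl_mul_mul {x y : CocycleExtension f} (h : Commute x.right y.right) :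
    x * y = (toGroupExtension f).inl
      (.ofAdd (f (x.right, y.right) - f (y.right, x.right))) * (y * x) := by
  ext
  · simp only [mul_left, mul_right, inl_left, inl_right, toAdd_ofAdd,
      Representation.isTrivial_apply, cocycles₂_map_one_fst]
    abel
  · simpa [-ofAdd_sub] using h.eq

theorem exists_inl_mul_eq {H : Type*} [Group H] (s₁ s₂ : H →* CocycleExtension f)
    (h : ∀ c, (s₁ c).right = (s₂ c).right) :
    ∃ χ : H →* Multiplicative A, ∀ c, s₁ c = (toGroupExtension f).inl (χ c) * s₂ c := by
  have hker (c : H) : s₁ c * (s₂ c)⁻¹ ∈ (toGroupExtension f).inl.range := by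
    rw [(toGroupExtension f).range_inl_eq_ker_rightHom, MonoidHom.mem_ker]
    simp [h c]
  choose χ hχ using hker
  replace hχ (c : H) : s₁ c = (toGroupExtension f).inl (χ c) * s₂ c := by simp [hχ c]
  refine ⟨.mk' χ fun c d ↦ (toGroupExtension f).inl_injective ?_, hχ⟩
  rw [← mul_left_inj (s₂ (c * d)), ← hχ, map_mul, map_mul, map_mul, hχ c, hχ d]
  exact (inl_commute (χ d) (s₂ c)).symm.mul_mul_mul_comm _ _

theorem exists_lift_of_subsingleton_H2 {H : Type u} [Group H]
    [Subsingleton (H2 (Rep.trivial k H A))] (f : cocycles₂ A) (φ : H →* G) :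
    ∃ s : H →* CocycleExtension f, ∀ h, (s h).right = φ h := by
  let f' : cocycles₂ (Rep.trivial k H A) := ⟨fun p ↦ f (φ p.1, φ p.2), by
    refine (mem_cocycles₂_iff (A := Rep.trivial k H A) _).2 fun g h j ↦ ?_
    have hf := (mem_cocycles₂_iff f).1 f.2 (φ g) (φ h) (φ j)
    rwa [Representation.isTrivial_apply, ← map_mul, ← map_mul] at hf⟩
  obtain ⟨x, hx⟩ := (H2π_eq_zero_iff f').1 (Subsingleton.elim _ _)
  refine (exists_lift_iff_exists_coboundary φ).2 ⟨x, fun g h ↦ ?_⟩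
  rw [Representation.isTrivial_apply]
  exact congrFun hx (g, h)

end CocycleExtension

/-- The commutator pairing of 2-cocycles with a fixed element `t` and the elements `j d` commuting
with it: a cocycle `f` is sent to the character `d ↦ f (t, j d) - f (j d, t)`, which is the
commutator of lifts of `t` and `j d` to the extension attached to `f`. -/
def commutatorPairing {D : Type*} [Group D] (t : G) (j : D →* G) (hj : ∀ d, Commute t (j d)) :
    cocycles₂ A →+ Additive (D →* Multiplicative A) where
  toFun f := .ofMul <| .mk' (fun d ↦ .ofAdd (f (t, j d) - f (j d, t))) fun c d ↦ by
    have h₁ := (mem_cocycles₂_iff f).1 f.2 t (j c) (j d)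
    have h₂ := (mem_cocycles₂_iff f).1 f.2 (j c) t (j d)
    have h₃ := (mem_cocycles₂_iff f).1 f.2 (j c) (j d) t
    rw [(hj c).eq] at h₁
    rw [(hj d).eq] at h₂
    simp only [Representation.isTrivial_apply] at h₁ h₂ h₃
    rw [map_mul, ← ofAdd_add]
    congr 1
    linear_combination (norm := module) h₂ - h₁ - h₃
  map_zero' := Additive.toMul.injective <| MonoidHom.ext fun d ↦
    congrArg Multiplicative.ofAdd (sub_self (0 : A))
  map_add' f g := Additive.toMul.injective <| MonoidHom.ext fun d ↦
    congrArg Multiplicative.ofAdd (add_sub_add_comm (f (t, j d)) _ _ _)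

@[simp] lemma commutatorPairing_apply {D : Type*} [Group D] (t : G) (j : D →* G)
    (hj : ∀ d, Commute t (j d)) (f : cocycles₂ A) (d : D) :
    (commutatorPairing t j hj f).toMul d = .ofAdd (f (t, j d) - f (j d, t)) := rfl

theorem commutatorPairing_eq_zero_of_mem_coboundaries₂ {D : Type*} [Group D] (t : G) (j : D →* G)
    (hj : ∀ d, Commute t (j d)) (hf : ⇑f ∈ coboundaries₂ A) : commutatorPairing t j hj f = 0 := by
  obtain ⟨x, hx⟩ := hf
  have hx' (g h : G) : f (g, h) = x h - x (g * h) + x g := by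
    rw [← hx, d₁₂_hom_apply, Representation.isTrivial_apply]
  refine Additive.toMul.injective <| MonoidHom.ext fun d ↦ ?_
  rw [commutatorPairing_apply, hx', hx', (hj d).eq]
  exact congrArg Multiplicative.ofAdd (by abel)

end Trivial

theorem exists_monoidHom_comp_eq {A B C : Type*} [AddCommGroup A] [DivisibleBy A ℤ] [CommGroup B]
    [CommGroup C] (j : B →* C) (hj : Function.Injective j) (χ : B →* Multiplicative A) :
    ∃ ψ : C →* Multiplicative A, ψ.comp j = χ := by
  obtain ⟨ψ, hψ⟩ := (Module.Baer.of_divisible A).extension_property_addMonoidHom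
    j.toAdditive hj χ.toAdditiveLeft
  exact ⟨ψ.toMultiplicativeRight, MonoidHom.ext fun b ↦ DFunLike.congr_fun hψ (.ofMul b)⟩

/-- The subgroup of points fixed by an automorphism `σ`, on which the characters classifying
`H²(C ⋊ ℤ, A)` live. -/
def fixedSubgroup {C : Type*} [Group C] (σ : MulAut C) : Subgroup C :=
  σ.toMonoidHom.eqLocus (.id C)

theorem mem_fixedSubgroup {C : Type*} [Group C] {σ : MulAut C} {c : C} :
    c ∈ fixedSubgroup σ ↔ σ c = c := Iff.rfl

theorem exists_div_eq_of_eq_one_on_fixedSubgroup {A C : Type*} [AddCommGroup A] [DivisibleBy A ℤ]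
    [CommGroup C] (σ : MulAut C) (χ : C →* Multiplicative A)
    (hχ : ∀ c ∈ fixedSubgroup σ, χ c = 1) :
    ∃ ψ : C →* Multiplicative A, ∀ c, χ c = ψ (σ c) / ψ c := by
  let δ : C →* C := σ.toMonoidHom / .id C
  have hker : δ.ker ≤ χ.ker := fun c hc ↦ hχ c (div_eq_one.1 hc)
  obtain ⟨ψ, hψ⟩ := exists_monoidHom_comp_eq (QuotientGroup.kerLift δ)
    (QuotientGroup.kerLift_injective δ) (QuotientGroup.lift δ.ker χ hker)
  refine ⟨ψ, fun c ↦ ?_⟩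
  rw [← map_div]
  exact (DFunLike.congr_fun hψ (c : C ⧸ δ.ker)).symm

theorem map_zpow_apply_eq_conj {C E : Type*} [Group C] [Group E] {σ : MulAut C} {s : C →* E}
    {t : E} (h : ∀ c, s (σ c) = t * s c * t⁻¹) (m : ℤ) (c : C) :
    s ((σ ^ m) c) = t ^ m * s c * (t ^ m)⁻¹ := by
  have hinv (c : C) : s (σ⁻¹ c) = t⁻¹ * s c * t := by
    have hc := h (σ⁻¹ c)
    rw [MulAut.apply_inv_self] at hc
    rw [hc]
    group
  induction m using Int.induction_on generalizing c with
  | zero => simp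
  | succ m ih => rw [zpow_add_one, MulAut.mul_apply, ih, h]; group
  | pred m ih => rw [zpow_sub_one, MulAut.mul_apply, ih, hinv]; group

theorem exists_crossedHom_int {X : Type*} [Group X] (φ : Multiplicative ℤ →* MulAut X) (x : X) :
    ∃ κ : Multiplicative ℤ → X, κ (.ofAdd 1) = x ∧ ∀ m n, κ (m * n) = κ m * φ m (κ n) := by
  let s : Multiplicative ℤ →* X ⋊[φ] Multiplicative ℤ := zpowersHom _ ⟨x, .ofAdd 1⟩
  have hs : SemidirectProduct.rightHom.comp s = .id _ := by ext; simp [s]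
  have hright (m) : (s m).right = m := DFunLike.congr_fun hs m
  exact ⟨fun m ↦ (s m).left, by simp [s], fun m n ↦ by simp [hright]⟩

theorem exists_crossedHom_monoidHom {C M : Type*} [Group C] [CommGroup M] (σ : MulAut C)
    (χ : C →* M) :
    ∃ κ : Multiplicative ℤ → (C →* M), κ (.ofAdd 1) = χ ∧
      ∀ m n c, κ (m * n) c = κ m c * κ n (zpowersHom (MulAut C) σ m c) := by
  obtain ⟨κ, hκ₁, hκ⟩ := exists_crossedHom_int
    ((MulDistribMulAction.toMulAut (MulAut C)ᵈᵐᵃ (C →* M)).comp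
      (zpowersHom _ (DomMulAct.mk σ))) χ
  exact ⟨κ, hκ₁, fun m n ↦ DFunLike.congr_fun (hκ m n)⟩

section IntSemidirect

variable {C : Type u} [Group C]

/-- The semidirect product `C ⋊ ℤ` in which `1 ∈ ℤ` acts on `C` by the automorphism `σ`. -/
abbrev IntSemidirect (σ : MulAut C) := C ⋊[zpowersHom (MulAut C) σ] Multiplicative ℤ

namespace IntSemidirect

variable {σ : MulAut C}

variable (σ) in
/-- The generator `1 ∈ ℤ`, as an element of `C ⋊ ℤ`. -/
def generator : IntSemidirect σ := SemidirectProduct.inr (.ofAdd 1)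

theorem generator_mul_inl_mul_inv (c : C) :
    generator σ * SemidirectProduct.inl c * (generator σ)⁻¹ = SemidirectProduct.inl (σ c) := by
  simpa [generator] using
    (SemidirectProduct.inl_aut (φ := zpowersHom (MulAut C) σ) (.ofAdd 1) c).symm

theorem commute_generator_inl {c : C} (hc : c ∈ fixedSubgroup σ) :
    Commute (generator σ) (SemidirectProduct.inl c) := by
  have h := generator_mul_inl_mul_inv (σ := σ) c
  rw [mem_fixedSubgroup.1 hc] at h
  exact mul_inv_eq_iff_eq_mul.1 h

variable {E : Type*} [Group E]

theorem hom_ext {F F' : IntSemidirect σ →* E}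
    (hinl : ∀ c, F (SemidirectProduct.inl c) = F' (SemidirectProduct.inl c))
    (hgen : F (generator σ) = F' (generator σ)) : F = F' :=
  SemidirectProduct.hom_ext (MonoidHom.ext hinl) (MonoidHom.ext_mint hgen)

theorem exists_lift (s : C →* E) (t : E) (h : ∀ c, s (σ c) = t * s c * t⁻¹) :
    ∃ F : IntSemidirect σ →* E,
      (∀ c, F (SemidirectProduct.inl c) = s c) ∧ F (generator σ) = t :=
  ⟨SemidirectProduct.lift s (zpowersHom E t) fun m ↦
      MonoidHom.ext fun c ↦ map_zpow_apply_eq_conj h m.toAdd c,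
    SemidirectProduct.lift_inl _ _ _, by simp [generator]⟩

variable {k : Type u} [CommRing k] {A : Rep k (IntSemidirect σ)} [A.IsTrivial]

variable (σ A) in
/-- The commutator pairing of 2-cocycles on `C ⋊ ℤ` with the generator of `ℤ`, on the fixed points
of `σ`. -/
def fixedPairing : cocycles₂ A →+ Additive (fixedSubgroup σ →* Multiplicative A) :=
  commutatorPairing (generator σ) (SemidirectProduct.inl.comp (fixedSubgroup σ).subtype)
    fun c ↦ commute_generator_inl c.2

open CocycleExtension

variable {f : cocycles₂ A} {s : C →* CocycleExtension f} {t : CocycleExtension f}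

theorem exists_conj_eq_inl_mul (hs : ∀ c, (s c).right = SemidirectProduct.inl c)
    (ht : t.right = generator σ) (hf : fixedPairing σ A f = 0) :
    ∃ χ : C →* Multiplicative A, (∀ c ∈ fixedSubgroup σ, χ c = 1) ∧
      ∀ c, t * s c * t⁻¹ = (toGroupExtension f).inl (χ c) * s (σ c) := by
  obtain ⟨χ, hχ⟩ : ∃ χ : C →* Multiplicative A,
      ∀ c, t * s c * t⁻¹ = (toGroupExtension f).inl (χ c) * s (σ c) :=
    exists_inl_mul_eq ((MulAut.conj t).toMonoidHom.comp s) (s.comp σ.toMonoidHom)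
      fun c ↦ by simp [hs, ht, generator_mul_inl_mul_inv]
  refine ⟨χ, fun c hc ↦ ?_, hχ⟩
  have hfc : f (t.right, (s c).right) - f ((s c).right, t.right) = 0 := by
    rw [hs, ht]
    exact congrArg Multiplicative.toAdd (DFunLike.congr_fun (congrArg Additive.toMul hf) ⟨c, hc⟩)
  have hcomm : t * s c = s c * t := by
    simpa [hfc] using mul_eq_inl_mul_mul (x := t) (y := s c)
      (by simpa [hs, ht] using commute_generator_inl hc)
  have hχc := hχ c
  rw [hcomm, mul_inv_cancel_right, mem_fixedSubgroup.1 hc, right_eq_mul] at hχc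
  exact (toGroupExtension f).inl_injective (hχc.trans (map_one _).symm)

end IntSemidirect

end IntSemidirect

section Commutative

variable {k C : Type u} [CommRing k] [CommGroup C] {σ : MulAut C}
  {A : Rep k (IntSemidirect σ)} [A.IsTrivial] [DivisibleBy A ℤ]

namespace IntSemidirect

section Kernel

open CocycleExtension

variable {f : cocycles₂ A} {s : C →* CocycleExtension f} {t : CocycleExtension f}

theorem exists_equivariant_lift (hs : ∀ c, (s c).right = SemidirectProduct.inl c)
    (ht : t.right = generator σ) (hf : fixedPairing σ A f = 0) :
    ∃ s' : C →* CocycleExtension f, (∀ c, (s' c).right = SemidirectProduct.inl c) ∧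
      ∀ c, s' (σ c) = t * s' c * t⁻¹ := by
  obtain ⟨χ, hχ_fixed, hχ⟩ := exists_conj_eq_inl_mul hs ht hf
  obtain ⟨ψ, hψ⟩ := exists_div_eq_of_eq_one_on_fixedSubgroup σ χ hχ_fixed
  let s' : C →* CocycleExtension f :=
    ((toGroupExtension f).inl.noncommCoprod s fun a c ↦ inl_commute a (s c)).comp (ψ.prod (.id C))
  refine ⟨s', fun c ↦ by simp [s', hs], fun c ↦ ?_⟩
  calc s' (σ c) = (toGroupExtension f).inl (ψ c * χ c) * s (σ c) := by simp [s', hψ]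
    _ = (toGroupExtension f).inl (ψ c) * t * (s c * t⁻¹) := by
      rw [map_mul, mul_assoc, ← hχ, mul_assoc, mul_assoc]
    _ = t * s' c * t⁻¹ := by simp [(inl_commute (ψ c) t).eq, s', mul_assoc]

theorem mem_coboundaries₂_of_fixedPairing_eq_zero
    [Subsingleton (H2 (Rep.trivial k C A))] (hf : fixedPairing σ A f = 0) :
    ⇑f ∈ coboundaries₂ A := by
  obtain ⟨t, ht⟩ : ∃ t : CocycleExtension f, t.right = generator σ := ⟨⟨0, generator σ⟩, rfl⟩
  obtain ⟨s, hs⟩ := exists_lift_of_subsingleton_H2 f SemidirectProduct.inl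
  obtain ⟨s', hs', hconj⟩ := exists_equivariant_lift hs ht hf
  obtain ⟨F, hFinl, hFgen⟩ := exists_lift s' t hconj
  have hF : (toGroupExtension f).rightHom.comp F = .id _ :=
    hom_ext (fun c ↦ by simp [hFinl, hs']) (by simp [hFgen, ht])
  obtain ⟨x, hx⟩ := (exists_lift_iff_exists_coboundary (.id _)).1 ⟨F, DFunLike.congr_fun hF⟩
  exact ⟨x, funext fun p ↦ hx p.1 p.2⟩

end Kernel

theorem fixedPairing_surjective : Function.Surjective (fixedPairing σ A) := by
  intro χ₀
  obtain ⟨χ, hχ⟩ := exists_monoidHom_comp_eq _ (fixedSubgroup σ).subtype_injective χ₀.toMul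
  obtain ⟨κ, hκ₁, hκ⟩ := exists_crossedHom_monoidHom σ χ
  let f : cocycles₂ A := ⟨fun p ↦ (κ p.1.right p.2.left).toAdd, by
    refine (mem_cocycles₂_iff _).2 fun g h j ↦ ?_
    rw [Representation.isTrivial_apply]
    simp only [SemidirectProduct.mul_right, SemidirectProduct.mul_left, map_mul, toAdd_mul,
      mul_comm g.right, hκ]
    abel⟩
  refine ⟨f, Additive.toMul.injective <| MonoidHom.ext fun c ↦ ?_⟩
  rw [← hχ]
  have h₁ : f (generator σ, SemidirectProduct.inl c) = (χ c).toAdd := by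
    simp [f, generator, hκ₁]
  have h₂ : f (SemidirectProduct.inl c, generator σ) = 0 := by
    simp [f, generator]
  exact congrArg Multiplicative.ofAdd ((congrArg₂ _ h₁ h₂).trans (sub_zero _))

variable [Subsingleton (H2 (Rep.trivial k C A))]

theorem ker_H2π_eq_ker_fixedPairing :
    (H2π A).hom.toAddMonoidHom.ker = (fixedPairing σ A).ker := by
  ext f
  exact (H2π_eq_zero_iff f).trans
    ⟨commutatorPairing_eq_zero_of_mem_coboundaries₂ _ _ _,
      mem_coboundaries₂_of_fixedPairing_eq_zero⟩

variable (σ A) in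
/-- If `A` is a divisible trivial module and `H²(C, A) = 0`, then `H²(C ⋊ ℤ, A)` is the group of
`A`-valued characters of the fixed points of `σ`, through the commutator pairing. -/
def H2AddEquiv : H2 A ≃+ Additive (fixedSubgroup σ →* Multiplicative A) :=
  (QuotientAddGroup.quotientKerEquivOfSurjective (H2π A).hom.toAddMonoidHom
    ((ModuleCat.epi_iff_surjective _).1 inferInstance)).symm.trans <|
  (QuotientAddGroup.quotientAddEquivOfEq ker_H2π_eq_ker_fixedPairing).trans <|
  QuotientAddGroup.quotientKerEquivOfSurjective _ fixedPairing_surjective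

end IntSemidirect

end Commutative

open CategoryTheory Rep.FiniteCyclicGroup in
theorem subsingleton_H2_trivial_of_isCyclic {k C A : Type u} [CommRing k] [CommGroup C] [Finite C]
    [IsCyclic C] [AddCommGroup A] [Module k A] [DivisibleBy A ℤ] :
    Subsingleton (H2 (Rep.trivial k C A)) := by
  obtain ⟨g, hg⟩ := IsCyclic.exists_generator (α := C)
  have := Fintype.ofFinite C
  have hexact : (normHomCompSub (Rep.trivial k C A) g).Exact := by
    refine (ShortComplex.moduleCat_exact_iff _).2 fun x _ ↦ ?_
    obtain ⟨y, hy⟩ := DivisibleBy.surjective_smul A ℤ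
      (Nat.cast_ne_zero.2 (Fintype.card_ne_zero (α := C))) x
    exact ⟨y, (Rep.norm_apply _).trans (by simpa [Representation.norm] using hy)⟩
  exact ModuleCat.subsingleton_of_isZero <|
    (ShortComplex.exact_iff_isZero_homology _).1 hexact |>.of_iso <|
      groupCohomologyIsoEven _ g hg 2 even_two

theorem nonempty_additive_monoidHom_units_addEquiv_zmod (D M : Type*) [CommGroup D] [Finite D]
    [IsCyclic D] [CommMonoid M] [HasEnoughRootsOfUnity M (Nat.card D)] :
    Nonempty (Additive (D →* Multiplicative (Additive Mˣ)) ≃+ ZMod (Nat.card D)) := by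
  obtain ⟨e⟩ := IsCyclic.monoidHom_equiv_self D M
  let e' : (D →* Multiplicative (Additive Mˣ)) ≃* D :=
    (MulEquiv.refl (Multiplicative (Additive Mˣ))).monoidHomCongrRight.trans e
  exact ⟨e'.toAdditive.trans (zmodAddCyclicAddEquiv inferInstance).symm⟩

theorem card_fixedSubgroup_of_forall_eq_pow {C : Type*} [CommGroup C] [Finite C] [IsCyclic C]
    {σ : MulAut C} {r : ℕ} (hσ : ∀ c, σ c = c ^ (r + 1)) :
    Nat.card (fixedSubgroup σ) = (Nat.card C).gcd r := by
  have hker : fixedSubgroup σ = (powMonoidHom r : C →* C).ker := by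
    ext c
    rw [mem_fixedSubgroup, hσ, pow_succ, mul_eq_right, MonoidHom.mem_ker, powMonoidHom_apply]
  rw [hker, IsCyclic.card_powMonoidHom_ker]

/-- The multiplicative group of an algebraically closed field is divisible; division by `n` is a
choice of an `n`-th root. -/
instance divisibleByIntAdditiveUnits {K : Type*} [Field K] [IsAlgClosed K] :
    DivisibleBy (Additive Kˣ) ℤ :=
  have : DivisibleBy (Additive Kˣ) ℕ := divisibleByOfSMulRightSurj _ _ fun {n} hn x ↦ by
    obtain ⟨z, hz⟩ := IsAlgClosed.exists_pow_nat_eq (x.toMul : K) (Nat.pos_of_ne_zero hn)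
    have hz₀ : z ≠ 0 := fun h ↦ x.toMul.ne_zero (by rw [← hz, h, zero_pow hn])
    exact ⟨.ofMul (.mk0 z hz₀), Additive.toMul.injective (Units.ext hz)⟩
  AddGroup.divisibleByIntOfDivisibleByNat _

theorem h2_semidirect_cunits_general {k C K : Type u} [CommRing k] [CommGroup C] [Finite C]
    [IsCyclic C] (σ : MulAut C) [Field K] [IsAlgClosed K] [NeZero (Nat.card (fixedSubgroup σ) : K)]
    [Module k (Additive Kˣ)] :
    Nonempty (H2 (Rep.trivial k (C ⋊[zpowersHom (MulAut C) σ] Multiplicative ℤ) (Additive Kˣ)) ≃+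
      ZMod (Nat.card (fixedSubgroup σ))) := by
  have : Subsingleton (H2 (Rep.trivial k C (Additive Kˣ))) := subsingleton_H2_trivial_of_isCyclic
  obtain ⟨e⟩ := nonempty_additive_monoidHom_units_addEquiv_zmod (fixedSubgroup σ) K
  exact ⟨(IntSemidirect.H2AddEquiv σ (Rep.trivial k _ (Additive Kˣ))).trans e⟩

/-- For `q = pⁿ` (`p` an odd prime) and `k` the field with `q²` elements, the second
cohomology of `G = kˣ ⋊ ℤ` (where `m ∈ ℤ` acts by the `m`-th power of `x ↦ x^q`) with
trivial coefficients `ℂˣ` is isomorphic to `ℤ/(q−1)ℤ`. -/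
theorem h2_semidirect_cunits (p n : ℕ) (hp : p.Prime) (hodd : Odd p) (hn : 0 < n)
    (k : Type) [Field k] [Fintype k] (hk : Fintype.card k = (p ^ n) ^ 2)
    (σ : MulAut kˣ) (hσ : ∀ x : kˣ, σ x = x ^ (p ^ n)) :
    Nonempty
      (H2 (Rep.trivial ℤ (kˣ ⋊[zpowersHom (MulAut kˣ) σ] Multiplicative ℤ)
        (Additive ℂˣ)) ≃+ ZMod (p ^ n - 1)) := by
  have hcard : Nat.card (fixedSubgroup σ) = p ^ n - 1 := by
    have hq : p ^ n - 1 + 1 = p ^ n := Nat.sub_add_cancel (Nat.one_le_pow _ _ hp.pos)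
    have hdvd : p ^ n - 1 ∣ Nat.card kˣ := by
      rw [Nat.card_units, Nat.card_eq_fintype_card, hk]
      exact Nat.sub_one_dvd_pow_sub_one _ _
    rw [card_fixedSubgroup_of_forall_eq_pow (hq.symm ▸ hσ), Nat.gcd_eq_right hdvd]
  exact hcard ▸ h2_semidirect_cunits_general (k := ℤ) (K := ℂ) σ
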